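/- arXiv:1910.03857 — 2 statements merged into one kernel-verified Lean document; each statement's English description precedes it below -/
import Mathlib

section
/- Suppose there is a constant C_ρ ≥ 1 with π̃(a|s)/π(a|s) ≤ C_ρ for all s ∈ S, a ∈ A, let ε = max_{s∈S, a∈A} |A^π(s,a)|, and suppose there is K ∈ ℕ such that for every t the vector α_t ∈ [0,1]^{t+1} has at most K nonzero coordinates. Then for every horizon T ∈ ℕ, the random variable L̂_T(τ) = ∑_{t=0}^{T} γ^t ρ^{α_t}_{0:t}(τ) · A^π(s_t, a_t) on trajectories τ ∼ π satisfies Var_{τ∼π}(L̂_T) ≤ ε² C_ρ^{2K} / (1 − γ)². -/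
open scoped BigOperators

namespace PolicyOpt

/-- A finite Markov decision process. -/
structure MDP (S A : Type*) [Fintype S] [Fintype A] where
  p : S → A → S → ℝ
  r : S → A → ℝ
  γ : ℝ
  μ0 : S → ℝ
  p_nonneg : ∀ s a s', 0 ≤ p s a s'
  p_sum_one : ∀ s a, ∑ s', p s a s' = 1
  μ0_nonneg : ∀ s, 0 ≤ μ0 s
  μ0_sum_one : ∑ s, μ0 s = 1
  γ_pos : 0 < γ
  γ_lt_one : γ < 1

variable {S A : Type*} [Fintype S] [Fintype A] [DecidableEq S] [DecidableEq A]

/-- A policy assigns to every state a probability distribution over actions. -/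
def IsPolicy (π : S → A → ℝ) : Prop :=
  (∀ s a, 0 ≤ π s a) ∧ ∀ s, ∑ a, π s a = 1

/-- Trajectory prefixes (histories) consisting of `t+1` state-action pairs. -/
abbrev Hist (S A : Type*) (t : ℕ) := Fin (t + 1) → S × A

/-- Probability of a history of length `t+1` when following policy `π`
starting from the initial distribution `μ0`. -/
noncomputable def prob (M : MDP S A) (π : S → A → ℝ) (t : ℕ) (h : Hist S A t) : ℝ :=
  (M.μ0 (h 0).1 * π (h 0).1 (h 0).2) *
    ∏ i : Fin t,
      (M.p (h i.castSucc).1 (h i.castSucc).2 (h i.succ).1 * π (h i.succ).1 (h i.succ).2)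

/-- Probability of a history of length `t+1` when following policy `π`,
conditioned on starting in state `s` with first action `a`. -/
noncomputable def probFrom (M : MDP S A) (π : S → A → ℝ) (s : S) (a : A) (t : ℕ) (h : Hist S A t) : ℝ :=
  (if h 0 = (s, a) then (1 : ℝ) else 0) *
    ∏ i : Fin t,
      (M.p (h i.castSucc).1 (h i.castSucc).2 (h i.succ).1 * π (h i.succ).1 (h i.succ).2)

/-- The last state-action pair of a history. -/
def lastSA {t : ℕ} (h : Hist S A t) : S × A := h (Fin.last t)

/-- State-action value `Q^π(s,a) = E_{τ∼π}[∑_{t≥0} γ^t r(s_t,a_t) | s₀=s, a₀=a]`. -/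
noncomputable def Qval (M : MDP S A) (π : S → A → ℝ) (s : S) (a : A) : ℝ :=
  ∑' t : ℕ, M.γ ^ t * ∑ h : Hist S A t, probFrom M π s a t h * M.r (lastSA h).1 (lastSA h).2

/-- State value `V^π(s)`. -/
noncomputable def Vval (M : MDP S A) (π : S → A → ℝ) (s : S) : ℝ :=
  ∑ a, π s a * Qval M π s a

/-- Advantage `A^π(s,a) = Q^π(s,a) - V^π(s)`. -/
noncomputable def Adv (M : MDP S A) (π : S → A → ℝ) (s : S) (a : A) : ℝ :=
  Qval M π s a - Vval M π s

/-- The value `η(π) = E_{τ∼π} ∑_{t≥0} γ^t r(s_t,a_t)`. -/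
noncomputable def ηval (M : MDP S A) (π : S → A → ℝ) : ℝ :=
  ∑' t : ℕ, M.γ ^ t * ∑ h : Hist S A t, prob M π t h * M.r (lastSA h).1 (lastSA h).2

/-- Normalised discounted state occupancy measure
`d^π(s) = (1-γ) ∑_{t≥0} γ^t Pr_{τ∼π}(s_t = s)`. -/
noncomputable def dOcc (M : MDP S A) (π : S → A → ℝ) (s : S) : ℝ :=
  (1 - M.γ) * ∑' t : ℕ, M.γ ^ t *
    ∑ h : Hist S A t, prob M π t h * (if (lastSA h).1 = s then (1 : ℝ) else 0)

/-- The surrogate objective `L_π(π') = (1/(1-γ)) ∑_s d^π(s) ∑_a π'(a|s) A^π(s,a)`. -/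
noncomputable def Lsur (M : MDP S A) (π π' : S → A → ℝ) : ℝ :=
  (1 - M.γ)⁻¹ * ∑ s, dOcc M π s * ∑ a, π' s a * Adv M π s a

/-- Product of importance sampling ratios `ρ_{0:t}` along a history. -/
noncomputable def ρprod (π π' : S → A → ℝ) {t : ℕ} (h : Hist S A t) : ℝ :=
  ∏ i, π' (h i).1 (h i).2 / π (h i).1 (h i).2

/-- Smoothed product of importance sampling ratios `ρ^{α}_{0:t}`. -/
noncomputable def ρpow (π π' : S → A → ℝ) {t : ℕ} (α : Fin (t + 1) → ℝ) (h : Hist S A t) : ℝ :=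
  ∏ i, (π' (h i).1 (h i).2 / π (h i).1 (h i).2) ^ (α i)

/-- The prefix of length `t+1` of a history of length `T+1` (for `t ≤ T`). -/
def pref {T : ℕ} (h : Hist S A T) (t : Fin (T + 1)) : Hist S A (t : ℕ) :=
  fun i => h (Fin.castLE t.isLt i)

/-!
The variance is at most the second moment, so it suffices to bound the estimator along every single
trajectory. A factor `ρ_i ^ α_i` of the smoothed ratio equals `1` when `α_i = 0` and is at most `Cρ`
otherwise, so sparsity caps the whole product at `Cρ ^ K` independently of its length `t + 1`.
Hence the `t`-th summand is at most `γ ^ t * (ε * Cρ ^ K)` in absolute value, and the geometric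
series contributes the factor `(1 - γ)⁻¹`.
-/

theorem sum_mul_sq_sub_sq_sum_mul_le_sq {ι R : Type*} [CommRing R] [LinearOrder R]
    [IsStrictOrderedRing R] {s : Finset ι} {w X : ι → R} {B : R}
    (hw : ∀ i ∈ s, 0 ≤ w i) (hw_sum : ∑ i ∈ s, w i = 1) (hX : ∀ i ∈ s, |X i| ≤ B) :
    ∑ i ∈ s, w i * X i ^ 2 - (∑ i ∈ s, w i * X i) ^ 2 ≤ B ^ 2 :=
  calc
    ∑ i ∈ s, w i * X i ^ 2 - (∑ i ∈ s, w i * X i) ^ 2 ≤ ∑ i ∈ s, w i * X i ^ 2 :=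
      sub_le_self _ (sq_nonneg _)
    _ ≤ ∑ i ∈ s, w i * B ^ 2 := by
      refine Finset.sum_le_sum fun i hi => mul_le_mul_of_nonneg_left ?_ (hw i hi)
      exact sq_le_sq.2 ((hX i hi).trans (le_abs_self B))
    _ = B ^ 2 := by rw [← Finset.sum_mul, hw_sum, one_mul]

theorem abs_sum_pow_mul_le_div_one_sub {𝕜 : Type*} [Field 𝕜] [LinearOrder 𝕜]
    [IsStrictOrderedRing 𝕜] {γ B : 𝕜} (hγ₀ : 0 ≤ γ) (hγ₁ : γ < 1) (hB : 0 ≤ B) {n : ℕ}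
    {x : Fin n → 𝕜} (hx : ∀ t, |x t| ≤ B) :
    |∑ t : Fin n, γ ^ (t : ℕ) * x t| ≤ B / (1 - γ) :=
  calc
    |∑ t : Fin n, γ ^ (t : ℕ) * x t| ≤ ∑ t : Fin n, |γ ^ (t : ℕ) * x t| :=
      Finset.abs_sum_le_sum_abs _ _
    _ ≤ ∑ t : Fin n, γ ^ (t : ℕ) * B := by
      gcongr with t
      rw [abs_mul, abs_of_nonneg (pow_nonneg hγ₀ _)]
      gcongr
      exact hx t
    _ = (∑ t ∈ Finset.Ico 0 n, γ ^ t) * B := by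
      rw [← Finset.sum_mul, Fin.sum_univ_eq_sum_range (γ ^ ·), Finset.range_eq_Ico]
    _ ≤ γ ^ 0 / (1 - γ) * B := by
      gcongr
      exact geom_sum_Ico_le_of_lt_one hγ₀ hγ₁
    _ = B / (1 - γ) := by rw [pow_zero, one_div_mul_eq_div]

theorem prod_rpow_le_pow_card_ne_zero {ι : Type*} {s : Finset ι} {x a : ι → ℝ} {C : ℝ}
    (hC : 1 ≤ C) (hx₀ : ∀ i ∈ s, 0 ≤ x i) (hxC : ∀ i ∈ s, x i ≤ C)
    (ha : ∀ i ∈ s, a i ∈ Set.Icc (0 : ℝ) 1) :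
    ∏ i ∈ s, x i ^ a i ≤ C ^ (s.filter fun i => a i ≠ 0).card := by
  have factor_le : ∀ i ∈ s, x i ^ a i ≤ C := fun i hi =>
    calc
      x i ^ a i ≤ C ^ a i := Real.rpow_le_rpow (hx₀ i hi) (hxC i hi) (ha i hi).1
      _ ≤ C := Real.rpow_le_self_of_one_le hC (ha i hi).2
  calc
    ∏ i ∈ s, x i ^ a i = ∏ i ∈ s with a i ≠ 0, x i ^ a i :=
      (Finset.prod_filter_of_ne fun i _ => mt fun ha₀ => by rw [ha₀, Real.rpow_zero]).symm
    _ ≤ ∏ i ∈ s with a i ≠ 0, C :=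
      Finset.prod_le_prod
        (fun i hi => Real.rpow_nonneg (hx₀ i (Finset.mem_of_mem_filter i hi)) _)
        fun i hi => factor_le i (Finset.mem_of_mem_filter i hi)
    _ = C ^ (s.filter fun i => a i ≠ 0).card := Finset.prod_const C

section Trajectories

omit [DecidableEq S] [DecidableEq A]

theorem IsPolicy.sum_mul_eq_sum {π : S → A → ℝ} (hπ : IsPolicy π) (μ : S → ℝ) :
    ∑ x : S × A, μ x.1 * π x.1 x.2 = ∑ s, μ s := by
  simp only [Fintype.sum_prod_type, ← Finset.mul_sum, hπ.2, mul_one]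

theorem prob_nonneg (M : MDP S A) {π : S → A → ℝ} (hπ : IsPolicy π) {T : ℕ} (h : Hist S A T) :
    0 ≤ prob M π T h :=
  mul_nonneg (mul_nonneg (M.μ0_nonneg _) (hπ.1 _ _)) <|
    Finset.prod_nonneg fun _ _ => mul_nonneg (M.p_nonneg _ _ _) (hπ.1 _ _)

theorem prob_snoc (M : MDP S A) (π : S → A → ℝ) {T : ℕ} (h : Hist S A T) (x : S × A) :
    prob M π (T + 1) (Fin.snoc (α := fun _ => S × A) h x) =
      prob M π T h * (M.p (lastSA h).1 (lastSA h).2 x.1 * π x.1 x.2) := by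
  have snoc_zero : (Fin.snoc (α := fun _ => S × A) h x : Hist S A (T + 1)) 0 = h 0 := by
    rw [← Fin.castSucc_zero, Fin.snoc_castSucc]
  unfold prob lastSA
  rw [Fin.prod_univ_castSucc, ← mul_assoc]
  simp only [snoc_zero, Fin.snoc_castSucc, ← Fin.castSucc_succ, Fin.succ_last, Fin.snoc_last]

theorem sum_prob (M : MDP S A) {π : S → A → ℝ} (hπ : IsPolicy π) (T : ℕ) :
    ∑ h : Hist S A T, prob M π T h = 1 := by
  induction T with
  | zero =>
    calc
      ∑ h : Hist S A 0, prob M π 0 h = ∑ x : S × A, M.μ0 x.1 * π x.1 x.2 := by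
        rw [← (Equiv.funUnique (Fin 1) (S × A)).symm.sum_comp]
        simp [prob]
      _ = 1 := by rw [hπ.sum_mul_eq_sum, M.μ0_sum_one]
  | succ T ih =>
    calc
      ∑ h : Hist S A (T + 1), prob M π (T + 1) h
          = ∑ h : Hist S A T, ∑ x : S × A,
              prob M π (T + 1) (Fin.snoc (α := fun _ => S × A) h x) := by
        rw [← (Fin.snocEquiv fun _ : Fin (T + 2) => S × A).sum_comp, Fintype.sum_prod_type_right]
        rfl
      _ = ∑ h : Hist S A T, prob M π T h := by
        simp only [prob_snoc, ← Finset.mul_sum, hπ.sum_mul_eq_sum, M.p_sum_one, mul_one]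
      _ = 1 := ih

end Trajectories

section Estimator

omit [Fintype S] [Fintype A] [DecidableEq S] [DecidableEq A]

variable {π π' : S → A → ℝ} {C : ℝ} {K : ℕ}

theorem ρpow_nonneg (hρ : ∀ s a, 0 ≤ π' s a / π s a) {t : ℕ} (α : Fin (t + 1) → ℝ)
    (h : Hist S A t) : 0 ≤ ρpow π π' α h :=
  Finset.prod_nonneg fun _ _ => Real.rpow_nonneg (hρ _ _) _

theorem ρpow_le_pow (hC : 1 ≤ C) (hρ₀ : ∀ s a, 0 ≤ π' s a / π s a)
    (hρC : ∀ s a, π' s a / π s a ≤ C) {t : ℕ} {α : Fin (t + 1) → ℝ}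
    (hα : ∀ i, α i ∈ Set.Icc (0 : ℝ) 1) (hK : (Finset.univ.filter fun i => α i ≠ 0).card ≤ K)
    (h : Hist S A t) : ρpow π π' α h ≤ C ^ K :=
  (prod_rpow_le_pow_card_ne_zero hC (fun _ _ => hρ₀ _ _) (fun _ _ => hρC _ _)
    fun i _ => hα i).trans (pow_le_pow_right₀ hC hK)

/-- The smoothed importance-sampling estimator `∑_{t=0}^{T} γ^t ρ^{α_t}_{0:t} f(s_t, a_t)` truncated
at horizon `T`, where `f` is any function of the current state and action; the paper's `L̂_T` is the
case `f = A^π`. -/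
noncomputable def smoothedIS (γ : ℝ) (π π' f : S → A → ℝ) (α : (t : ℕ) → Fin (t + 1) → ℝ) {T : ℕ}
    (h : Hist S A T) : ℝ :=
  ∑ t : Fin (T + 1), γ ^ (t : ℕ) * ρpow π π' (α t) (pref h t) * f (h t).1 (h t).2

theorem abs_smoothedIS_le {γ : ℝ} (hγ₀ : 0 ≤ γ) (hγ₁ : γ < 1) (hC : 1 ≤ C)
    (hρ₀ : ∀ s a, 0 ≤ π' s a / π s a) (hρC : ∀ s a, π' s a / π s a ≤ C)
    {f : S → A → ℝ} {ε : ℝ} (hf : ∀ s a, |f s a| ≤ ε)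
    {α : (t : ℕ) → Fin (t + 1) → ℝ} (hα : ∀ t i, α t i ∈ Set.Icc (0 : ℝ) 1)
    (hK : ∀ t : ℕ, (Finset.univ.filter fun i => α t i ≠ 0).card ≤ K)
    {T : ℕ} (h : Hist S A T) :
    |smoothedIS γ π π' f α h| ≤ ε * C ^ K / (1 - γ) := by
  have term_le (t : Fin (T + 1)) :
      |ρpow π π' (α t) (pref h t) * f (h t).1 (h t).2| ≤ ε * C ^ K := by
    rw [abs_mul, abs_of_nonneg (ρpow_nonneg hρ₀ _ _), mul_comm]
    exact mul_le_mul (hf _ _) (ρpow_le_pow hC hρ₀ hρC (hα t) (hK t) _) (ρpow_nonneg hρ₀ _ _)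
      ((abs_nonneg _).trans (hf (h t).1 (h t).2))
  simp only [smoothedIS, mul_assoc]
  exact abs_sum_pow_mul_le_div_one_sub hγ₀ hγ₁ ((abs_nonneg _).trans (term_le 0)) term_le

end Estimator

omit [DecidableEq S] [DecidableEq A] in
theorem variance_bound_smoothed_IS_sparse_general
    (M : MDP S A) {π π' : S → A → ℝ}
    (hπ : IsPolicy π) (hπ' : ∀ s a, 0 ≤ π' s a) (hπpos : ∀ s a, 0 < π s a)
    {C : ℝ} (hC : 1 ≤ C) (hratio : ∀ s a, π' s a / π s a ≤ C)
    {f : S → A → ℝ} {ε : ℝ} (hf : ∀ s a, |f s a| ≤ ε)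
    {α : (t : ℕ) → Fin (t + 1) → ℝ} (hα : ∀ t i, α t i ∈ Set.Icc (0 : ℝ) 1)
    {K : ℕ} (hK : ∀ t : ℕ, (Finset.univ.filter fun i => α t i ≠ 0).card ≤ K) (T : ℕ) :
    (∑ h : Hist S A T, prob M π T h * smoothedIS M.γ π π' f α h ^ 2) -
        (∑ h : Hist S A T, prob M π T h * smoothedIS M.γ π π' f α h) ^ 2 ≤
      ε ^ 2 * C ^ (2 * K) / (1 - M.γ) ^ 2 := by
  have hρ₀ (s : S) (a : A) : 0 ≤ π' s a / π s a := div_nonneg (hπ' s a) (hπpos s a).le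
  refine (sum_mul_sq_sub_sq_sum_mul_le_sq (fun h _ => prob_nonneg M hπ h) (sum_prob M hπ T)
    fun h _ => abs_smoothedIS_le M.γ_pos.le M.γ_lt_one hC hρ₀ hratio hf hα hK h).trans_eq ?_
  rw [div_pow, mul_pow, ← pow_mul, mul_comm K]

/-- With sparsity level `K` for the smoothing vectors, the variance of the
truncated smoothed importance-sampling estimator is uniformly bounded. -/
theorem variance_bound_smoothed_IS_sparse
    [Nonempty S] [Nonempty A]
    (M : MDP S A) (π π' : S → A → ℝ)
    (hπ : IsPolicy π) (hπ' : IsPolicy π')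
    (hπpos : ∀ s a, 0 < π s a)
    (Cρ : ℝ) (hCρ : 1 ≤ Cρ) (hratio : ∀ s a, π' s a / π s a ≤ Cρ)
    (ε : ℝ)
    (hε : ε = Finset.univ.sup' Finset.univ_nonempty fun q : S × A => |Adv M π q.1 q.2|)
    (α : (t : ℕ) → Fin (t + 1) → ℝ) (hα : ∀ t i, α t i ∈ Set.Icc (0 : ℝ) 1)
    (K : ℕ) (hK : ∀ t : ℕ, (Finset.univ.filter fun i => α t i ≠ 0).card ≤ K) :
    ∀ T : ℕ,
      (∑ h : Hist S A T, prob M π T h *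
          (∑ t : Fin (T + 1),
            M.γ ^ (t : ℕ) * ρpow π π' (α t) (pref h t) * Adv M π (h t).1 (h t).2) ^ 2) -
        (∑ h : Hist S A T, prob M π T h *
          ∑ t : Fin (T + 1),
            M.γ ^ (t : ℕ) * ρpow π π' (α t) (pref h t) * Adv M π (h t).1 (h t).2) ^ 2 ≤
        ε ^ 2 * Cρ ^ (2 * K) / (1 - M.γ) ^ 2 := by
  have abs_adv_le (s : S) (a : A) : |Adv M π s a| ≤ ε :=
    hε ▸ Finset.le_sup' (fun q : S × A => |Adv M π q.1 q.2|) (Finset.mem_univ (s, a))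
  exact variance_bound_smoothed_IS_sparse_general M hπ hπ'.1 hπpos hCρ hratio abs_adv_le hα hK

end PolicyOpt
end

section
/- For any two policies π and π̃, η(π̃) − η(π) = (1/(1−γ)) · ∑_{s∈S} d^π(s) ∑_{a∈A} (π̃(a|s) − π(a|s)) · Q^{π̃}(s,a). -/
open scoped BigOperators

namespace PolicyOpt

variable {S A : Type*} [Fintype S] [Fintype A] [DecidableEq S] [DecidableEq A]

/-!
Let `P` be the `(S × A) × S` transition matrix and `Π` the `S × (S × A)` matrix of a policy `π`, so
that `Π P` and `P Π` are the Markov chains which `π` induces on states and on state-action pairs.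
Summing the geometric series in `γ` turns the definitions into linear algebra: the unnormalised
occupancy `ρ` of `π` solves the Bellman flow equation `ρ = μ₀ + γ ρ Π P`, the action values `Q'` of
`π'` solve the Bellman equation `Q' = r + γ P Π' Q'`, and `η(π) = ρ Π r`. Eliminating `r` and then
`γ ρ Π P` gives `η(π) = μ₀ Π' Q' + ρ (Π - Π') Q'`; at `π = π'` this reads `η(π') = μ₀ Π' Q'`, and
the two are subtracted.
-/

open Matrix Function

section Matrices

variable {m n R : Type*} [Fintype m] [Fintype n]

theorem matrix_mul_pow_mul [DecidableEq m] [DecidableEq n] [Semiring R]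
    (A : Matrix m n R) (B : Matrix n m R) (t : ℕ) : (A * B) ^ t * A = A * (B * A) ^ t := by
  induction t with
  | zero => simp
  | succ t ih => simp only [pow_succ', Matrix.mul_assoc, ih]

theorem mul_mem_rowStochastic [DecidableEq m] [Semiring R] [PartialOrder R] [IsOrderedRing R]
    {A : Matrix m n R} {B : Matrix n m R} (hA : ∀ i j, 0 ≤ A i j) (hA_one : A *ᵥ 1 = 1)
    (hB : ∀ i j, 0 ≤ B i j) (hB_one : B *ᵥ 1 = 1) : A * B ∈ rowStochastic R m :=
  ⟨fun i k => Finset.sum_nonneg fun j _ => mul_nonneg (hA i j) (hB j k), by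
    rw [← mulVec_mulVec, hB_one, hA_one]⟩

theorem sum_path_eq_dotProduct_pow_mulVec [DecidableEq n] [CommSemiring R]
    (w f : n → R) (K : Matrix n n R) (t : ℕ) :
    ∑ h : Fin (t + 1) → n,
        (w (h 0) * ∏ i : Fin t, K (h i.castSucc) (h i.succ)) * f (h (Fin.last t)) =
      w ⬝ᵥ K ^ t *ᵥ f := by
  induction t generalizing w with
  | zero =>
    rw [← (Equiv.funUnique (Fin 1) n).symm.sum_comp]
    simp [dotProduct]
  | succ t ih =>
    -- Sum out the first vertex: the remaining path starts with weights `w ᵥ* K`.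
    rw [pow_succ', ← mulVec_mulVec, dotProduct_mulVec, ← ih,
      ← (Fin.consEquiv fun _ => n).sum_comp, Fintype.sum_prod_type, Finset.sum_comm]
    refine Finset.sum_congr rfl fun h _ => ?_
    simp only [vecMul, dotProduct, Finset.sum_mul, Fin.prod_univ_succ, Fin.consEquiv_apply,
      Fin.cons_zero, Fin.cons_succ, ← Fin.succ_castSucc, Fin.castSucc_zero, ← Fin.succ_last]
    exact Finset.sum_congr rfl fun _ _ => by ring

variable [DecidableEq n]

section Norm

open scoped Matrix.Norms.Operator

theorem linfty_opNorm_le_one_of_mem_rowStochastic {K : Matrix n n ℝ}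
    (hK : K ∈ rowStochastic ℝ n) : ‖K‖ ≤ 1 := by
  rw [linfty_opNorm_def, NNReal.coe_le_one]
  refine Finset.sup_le fun i _ => ?_
  rw [← NNReal.coe_le_one, NNReal.coe_sum, ← sum_row_of_mem_rowStochastic hK i]
  exact Finset.sum_le_sum fun j _ => (Real.norm_of_nonneg (nonneg_of_mem_rowStochastic hK)).le

theorem summable_smul_pow_of_mem_rowStochastic {K : Matrix n n ℝ} (hK : K ∈ rowStochastic ℝ n)
    {γ : ℝ} (hγ : |γ| < 1) : Summable fun t : ℕ => (γ • K) ^ t := by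
  refine summable_geometric_of_norm_lt_one ?_
  calc ‖γ • K‖ ≤ |γ| * ‖K‖ := norm_smul_le γ K
    _ ≤ |γ| := mul_le_of_le_one_right (abs_nonneg γ)
        (linfty_opNorm_le_one_of_mem_rowStochastic hK)
    _ < 1 := hγ

end Norm

section Potential

variable [CommRing R] [TopologicalSpace R]

/-- The discounted potential matrix `∑ₜ γᵗ Kᵗ` of the kernel `K`, meaningful when the series
converges. -/
noncomputable def potential (γ : R) (K : Matrix n n R) : Matrix n n R := ∑' t : ℕ, (γ • K) ^ t

variable [IsTopologicalRing R] [T2Space R]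

theorem potential_mul_one_sub {γ : R} {K : Matrix n n R}
    (h : Summable fun t : ℕ => (γ • K) ^ t) : potential γ K * (1 - γ • K) = 1 :=
  h.tsum_pow_mul_one_sub

theorem one_sub_mul_potential {γ : R} {K : Matrix n n R}
    (h : Summable fun t : ℕ => (γ • K) ^ t) : (1 - γ • K) * potential γ K = 1 :=
  h.one_sub_mul_tsum_pow

theorem tsum_pow_mul_dotProduct_pow_mulVec {γ : R} {K : Matrix n n R}
    (h : Summable fun t : ℕ => (γ • K) ^ t) (w f : n → R) :
    ∑' t : ℕ, γ ^ t * (w ⬝ᵥ K ^ t *ᵥ f) = w ⬝ᵥ potential γ K *ᵥ f := by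
  let φ : Matrix n n R →+ R :=
    { toFun := fun G => w ⬝ᵥ G *ᵥ f
      map_zero' := by simp
      map_add' := fun G H => by rw [add_mulVec, dotProduct_add] }
  have hφ : Continuous φ :=
    continuous_const.dotProduct (continuous_id.matrix_mulVec continuous_const)
  calc ∑' t : ℕ, γ ^ t * (w ⬝ᵥ K ^ t *ᵥ f) = ∑' t : ℕ, φ ((γ • K) ^ t) :=
        tsum_congr fun t => by
          simp [φ, smul_pow, smul_mulVec, dotProduct_smul]
    _ = φ (potential γ K) := (h.hasSum.map φ hφ).tsum_eq

end Potential

end Matrices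

/-- The matrix `Π` of a policy, with `Π (s, (s, a)) = π(a|s)`. Acting on column vectors it averages
over actions; acting on row vectors it extends a distribution of states to state-action pairs. -/
def policyMatrix (π : S → A → ℝ) : Matrix S (S × A) ℝ :=
  of fun s x => if x.1 = s then π x.1 x.2 else 0

/-- The transition probabilities as a matrix from state-action pairs to states. -/
def MDP.transitionMatrix (M : MDP S A) : Matrix (S × A) S ℝ :=
  of fun x => M.p x.1 x.2

/-- The transition matrix of the Markov chain of states under `π`. -/
def MDP.stateKernel (M : MDP S A) (π : S → A → ℝ) : Matrix S S ℝ :=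
  policyMatrix π * M.transitionMatrix

/-- The transition matrix of the Markov chain of state-action pairs under `π`. -/
def MDP.stateActionKernel (M : MDP S A) (π : S → A → ℝ) : Matrix (S × A) (S × A) ℝ :=
  M.transitionMatrix * policyMatrix π

/-- The unnormalised discounted occupancy `∑ₜ γᵗ Pr(sₜ = s)`, as a row vector. -/
noncomputable def MDP.discountedVisits (M : MDP S A) (π : S → A → ℝ) : S → ℝ :=
  M.μ0 ᵥ* potential M.γ (M.stateKernel π)

section

omit [DecidableEq A]

theorem policyMatrix_mulVec_apply (π : S → A → ℝ) (f : S × A → ℝ) (s : S) :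
    (policyMatrix π *ᵥ f) s = ∑ a, π s a * f (s, a) := by
  simp [policyMatrix, mulVec, dotProduct, Fintype.sum_prod_type_right]

omit [Fintype A] in
theorem vecMul_policyMatrix_apply (π : S → A → ℝ) (w : S → ℝ) (x : S × A) :
    (w ᵥ* policyMatrix π) x = w x.1 * π x.1 x.2 := by
  simp [policyMatrix, vecMul, dotProduct]

theorem MDP.stateActionKernel_apply (M : MDP S A) (π : S → A → ℝ) (x y : S × A) :
    M.stateActionKernel π x y = M.p x.1 x.2 y.1 * π y.1 y.2 :=
  vecMul_policyMatrix_apply π (M.p x.1 x.2) y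

namespace IsPolicy

variable {π : S → A → ℝ}

omit [Fintype S] in
theorem policyMatrix_nonneg (hπ : IsPolicy π) (s : S) (x : S × A) : 0 ≤ policyMatrix π s x :=
  ite_nonneg (hπ.1 _ _) le_rfl

theorem policyMatrix_mulVec_one (hπ : IsPolicy π) : policyMatrix π *ᵥ 1 = 1 := by
  ext s
  simp [policyMatrix_mulVec_apply, hπ.2]

end IsPolicy

namespace MDP

variable (M : MDP S A) {π : S → A → ℝ}

omit [DecidableEq S] in
theorem transitionMatrix_nonneg (x : S × A) (s : S) : 0 ≤ M.transitionMatrix x s :=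
  M.p_nonneg x.1 x.2 s

omit [DecidableEq S] in
theorem transitionMatrix_mulVec_one : M.transitionMatrix *ᵥ 1 = 1 := by
  ext x
  simp [transitionMatrix, mulVec, dotProduct, M.p_sum_one]

omit [DecidableEq S] in
theorem abs_γ_lt_one : |M.γ| < 1 := by
  rw [abs_of_pos M.γ_pos]
  exact M.γ_lt_one

theorem stateKernel_mem_rowStochastic (hπ : IsPolicy π) :
    M.stateKernel π ∈ rowStochastic ℝ S :=
  mul_mem_rowStochastic hπ.policyMatrix_nonneg hπ.policyMatrix_mulVec_one
    M.transitionMatrix_nonneg M.transitionMatrix_mulVec_one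

theorem summable_stateKernel_pow (hπ : IsPolicy π) :
    Summable fun t : ℕ => (M.γ • M.stateKernel π) ^ t :=
  summable_smul_pow_of_mem_rowStochastic (M.stateKernel_mem_rowStochastic hπ) M.abs_γ_lt_one

theorem discountedVisits_eq_add (hπ : IsPolicy π) :
    M.discountedVisits π = M.μ0 + M.discountedVisits π ᵥ* (M.γ • M.stateKernel π) := by
  rw [← sub_eq_iff_eq_add]
  calc M.discountedVisits π - M.discountedVisits π ᵥ* (M.γ • M.stateKernel π)
      = M.discountedVisits π ᵥ* (1 - M.γ • M.stateKernel π) := by rw [vecMul_sub, vecMul_one]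
    _ = M.μ0 := by
        rw [discountedVisits, vecMul_vecMul,
          potential_mul_one_sub (M.summable_stateKernel_pow hπ), vecMul_one]

end MDP

theorem sum_prob_mul (M : MDP S A) (π : S → A → ℝ) (t : ℕ) (f : S × A → ℝ) :
    ∑ h : Hist S A t, prob M π t h * f (lastSA h) =
      M.μ0 ⬝ᵥ M.stateKernel π ^ t *ᵥ (policyMatrix π *ᵥ f) := by
  classical
  calc ∑ h : Hist S A t, prob M π t h * f (lastSA h)
      = (M.μ0 ᵥ* policyMatrix π) ⬝ᵥ M.stateActionKernel π ^ t *ᵥ f := by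
        simp only [← sum_path_eq_dotProduct_pow_mulVec, vecMul_policyMatrix_apply,
          MDP.stateActionKernel_apply, prob, lastSA]
    _ = M.μ0 ⬝ᵥ M.stateKernel π ^ t *ᵥ (policyMatrix π *ᵥ f) := by
        rw [← dotProduct_mulVec, mulVec_mulVec, mulVec_mulVec, MDP.stateActionKernel,
          MDP.stateKernel, matrix_mul_pow_mul]

theorem tsum_sum_prob_mul (M : MDP S A) {π : S → A → ℝ} (hπ : IsPolicy π) (f : S × A → ℝ) :
    ∑' t : ℕ, M.γ ^ t * ∑ h : Hist S A t, prob M π t h * f (lastSA h) =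
      M.discountedVisits π ⬝ᵥ policyMatrix π *ᵥ f := by
  simp only [sum_prob_mul]
  rw [tsum_pow_mul_dotProduct_pow_mulVec (M.summable_stateKernel_pow hπ), dotProduct_mulVec,
    MDP.discountedVisits]

theorem ηval_eq_discountedVisits_dotProduct (M : MDP S A) {π : S → A → ℝ} (hπ : IsPolicy π) :
    ηval M π = M.discountedVisits π ⬝ᵥ policyMatrix π *ᵥ uncurry M.r :=
  tsum_sum_prob_mul M hπ (uncurry M.r)

theorem dOcc_eq_mul_discountedVisits (M : MDP S A) {π : S → A → ℝ} (hπ : IsPolicy π) (s : S) :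
    dOcc M π s = (1 - M.γ) * M.discountedVisits π s := by
  have h_indicator :
      policyMatrix π *ᵥ (fun x : S × A => if x.1 = s then 1 else 0) = Pi.single s 1 := by
    ext s'
    by_cases hs : s' = s <;> simp [policyMatrix_mulVec_apply, hs, hπ.2]
  rw [dOcc, tsum_sum_prob_mul M hπ fun x => if x.1 = s then 1 else 0, h_indicator,
    dotProduct_single_one]

end

theorem MDP.stateActionKernel_mem_rowStochastic (M : MDP S A) {π : S → A → ℝ} (hπ : IsPolicy π) :
    M.stateActionKernel π ∈ rowStochastic ℝ (S × A) :=
  mul_mem_rowStochastic M.transitionMatrix_nonneg M.transitionMatrix_mulVec_one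
    hπ.policyMatrix_nonneg hπ.policyMatrix_mulVec_one

theorem MDP.summable_stateActionKernel_pow (M : MDP S A) {π : S → A → ℝ} (hπ : IsPolicy π) :
    Summable fun t : ℕ => (M.γ • M.stateActionKernel π) ^ t :=
  summable_smul_pow_of_mem_rowStochastic (M.stateActionKernel_mem_rowStochastic hπ) M.abs_γ_lt_one

theorem sum_probFrom_mul (M : MDP S A) (π : S → A → ℝ) (s : S) (a : A) (t : ℕ) (f : S × A → ℝ) :
    ∑ h : Hist S A t, probFrom M π s a t h * f (lastSA h) =
      Pi.single (s, a) 1 ⬝ᵥ M.stateActionKernel π ^ t *ᵥ f := by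
  simp only [← sum_path_eq_dotProduct_pow_mulVec, Pi.single_apply, MDP.stateActionKernel_apply,
    probFrom, lastSA]

theorem policyMatrix_mulVec_Qval (M : MDP S A) (π : S → A → ℝ) :
    policyMatrix π *ᵥ uncurry (Qval M π) = Vval M π :=
  funext (policyMatrix_mulVec_apply π _)

theorem Qval_eq_potential_mulVec (M : MDP S A) {π : S → A → ℝ} (hπ : IsPolicy π) :
    uncurry (Qval M π) = potential M.γ (M.stateActionKernel π) *ᵥ uncurry M.r := by
  ext ⟨s, a⟩
  calc Qval M π s a
      = ∑' t : ℕ, M.γ ^ t *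
          (Pi.single (s, a) 1 ⬝ᵥ M.stateActionKernel π ^ t *ᵥ uncurry M.r) :=
        tsum_congr fun t => congrArg (M.γ ^ t * ·) (sum_probFrom_mul M π s a t (uncurry M.r))
    _ = (potential M.γ (M.stateActionKernel π) *ᵥ uncurry M.r) (s, a) := by
        rw [tsum_pow_mul_dotProduct_pow_mulVec (M.summable_stateActionKernel_pow hπ),
          single_one_dotProduct]

theorem reward_eq_Qval_sub (M : MDP S A) {π : S → A → ℝ} (hπ : IsPolicy π) :
    uncurry M.r = uncurry (Qval M π) - M.γ • (M.transitionMatrix *ᵥ Vval M π) := by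
  calc uncurry M.r = (1 - M.γ • M.stateActionKernel π) *ᵥ uncurry (Qval M π) := by
        rw [Qval_eq_potential_mulVec M hπ, mulVec_mulVec,
          one_sub_mul_potential (M.summable_stateActionKernel_pow hπ), one_mulVec]
    _ = uncurry (Qval M π) - M.γ • (M.transitionMatrix *ᵥ Vval M π) := by
        rw [sub_mulVec, one_mulVec, smul_mulVec, MDP.stateActionKernel, ← mulVec_mulVec,
          policyMatrix_mulVec_Qval]

/-- Performance difference lemma: the second summand collects the expected advantages of `π` over
`π'` along the trajectories of `π`. -/
theorem ηval_eq_dotProduct_Vval_add (M : MDP S A) {π π' : S → A → ℝ}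
    (hπ : IsPolicy π) (hπ' : IsPolicy π') :
    ηval M π = M.μ0 ⬝ᵥ Vval M π' +
      M.discountedVisits π ⬝ᵥ (policyMatrix π *ᵥ uncurry (Qval M π') - Vval M π') := by
  have h_flow : M.discountedVisits π ⬝ᵥ Vval M π' =
      M.μ0 ⬝ᵥ Vval M π' + M.discountedVisits π ⬝ᵥ (M.γ • M.stateKernel π) *ᵥ Vval M π' := by
    rw [dotProduct_mulVec, ← add_dotProduct, ← M.discountedVisits_eq_add hπ]
  have h_bellman : policyMatrix π *ᵥ uncurry M.r =
      policyMatrix π *ᵥ uncurry (Qval M π') - (M.γ • M.stateKernel π) *ᵥ Vval M π' := by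
    rw [reward_eq_Qval_sub M hπ', mulVec_sub, mulVec_smul, mulVec_mulVec, smul_mulVec,
      MDP.stateKernel]
  rw [ηval_eq_discountedVisits_dotProduct M hπ, h_bellman, dotProduct_sub, dotProduct_sub, h_flow]
  ring

theorem ηval_eq_dotProduct_Vval (M : MDP S A) {π : S → A → ℝ} (hπ : IsPolicy π) :
    ηval M π = M.μ0 ⬝ᵥ Vval M π := by
  rw [ηval_eq_dotProduct_Vval_add M hπ hπ, policyMatrix_mulVec_Qval, sub_self, dotProduct_zero,
    add_zero]

/-- Value dependency equality:
`η(π̃) − η(π) = (1/(1−γ)) ∑_s d^π(s) ∑_a (π̃(a|s) − π(a|s)) Q^{π̃}(s,a)`. -/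
theorem value_dependency_equality
    (M : MDP S A) (π π' : S → A → ℝ)
    (hπ : IsPolicy π) (hπ' : IsPolicy π') :
    ηval M π' - ηval M π =
      (1 - M.γ)⁻¹ * ∑ s, dOcc M π s * ∑ a, (π' s a - π s a) * Qval M π' s a := by
  have h_gamma : 1 - M.γ ≠ 0 := sub_ne_zero.2 M.γ_lt_one.ne'
  have h_action : ∀ s, ∑ a, (π' s a - π s a) * Qval M π' s a =
      (Vval M π' - policyMatrix π *ᵥ uncurry (Qval M π')) s := fun s => by
    simp only [Pi.sub_apply, Vval, policyMatrix_mulVec_apply, uncurry_apply_pair, sub_mul,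
      Finset.sum_sub_distrib]
  calc ηval M π' - ηval M π
      = M.discountedVisits π ⬝ᵥ (Vval M π' - policyMatrix π *ᵥ uncurry (Qval M π')) := by
        rw [ηval_eq_dotProduct_Vval M hπ', ηval_eq_dotProduct_Vval_add M hπ hπ',
          sub_add_cancel_left, ← dotProduct_neg, neg_sub]
    _ = (1 - M.γ)⁻¹ * ∑ s, dOcc M π s * ∑ a, (π' s a - π s a) * Qval M π' s a := by
        simp only [dOcc_eq_mul_discountedVisits M hπ, h_action, mul_assoc, ← Finset.mul_sum]
        rw [inv_mul_cancel_left₀ h_gamma, dotProduct]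

end PolicyOpt
end
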